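/- arXiv:2112.12246 — 3 statements merged into one kernel-verified Lean document; each statement's English description precedes it below -/
import Mathlib

section
/- Let $X$ and $Y$ be Tychonoff topological spaces of countable netweight, and let $Z$ be a compact Hausdorff space. If $C_p(X\times Z)$ is homeomorphic to $C_p(Y\times Z)$, then there exists a compact metrizable space $M$ such that $C_p(X\times M)$ is homeomorphic to $C_p(Y\times M)$. -/
/-!
Only closed subspaces of the form `{f | f factors through id × q}` matter, where `q` is a quotient
map of `Z`: when `q` has image `M`, such a subspace of `Cp (X × Z)` is a copy of `Cp (X × M)`, so
it is enough to find `q` with `M` metrizable for which `h : Cp (X × Z) ≃ₜ Cp (Y × Z)` matches the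
two subspaces. Take `q` to be the diagonal of a countable family `E` of functions on `Z`. By the
Chinese remainder theorem the functions on `X × Z` factoring through `id × q` are pointwise limits
from the rational algebra generated by `E` and a countable dense subset of `Cp X`. Hence `h` maps
this subspace into its analogue for `Y` as soon as `E` contains the sections of the images of that
countable algebra over a countable dense subset of `Y`, and a countable `E` closed under this
operation for both `h` and `h.symm` is reached after `ω` steps.
-/

open TopologicalSpace Function Set Topology

/-- `Cp X`: continuous real-valued functions on `X` with the topology of pointwise
convergence (subspace topology from the product `ℝ^X`). -/
abbrev Cp (X : Type*) [TopologicalSpace X] : Type _ := {f : X → ℝ // Continuous f}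

/-- A space has countable netweight if it has a countable network. -/
def HasCountableNetweight (X : Type*) [TopologicalSpace X] : Prop :=
  ∃ S : Set (Set X), S.Countable ∧
    ∀ x : X, ∀ U : Set X, IsOpen U → x ∈ U → ∃ s ∈ S, x ∈ s ∧ s ⊆ U

/-- A map is perfect if it is continuous, closed, and has compact fibers. -/
def IsPerfectMap {α β : Type*} [TopologicalSpace α] [TopologicalSpace β] (f : α → β) : Prop :=
  Continuous f ∧ IsClosedMap f ∧ ∀ b : β, IsCompact (f ⁻¹' {b})

/-- A space is countably compact if every countable open cover has a finite subcover. -/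
def CountablyCompact (X : Type*) [TopologicalSpace X] : Prop :=
  ∀ U : ℕ → Set X, (∀ n, IsOpen (U n)) → (⋃ n, U n) = Set.univ →
    ∃ t : Finset ℕ, (⋃ n ∈ t, U n) = Set.univ

universe u

theorem exists_mem_subalgebra_eqOn_of_finite {K T : Type*} [Field K] (A : Subalgebra K (T → K))
    {f : T → K} (hf : ∀ s t, (∀ a ∈ A, a s = a t) → f s = f t) {I : Set T} (hI : I.Finite) :
    ∃ a ∈ A, EqOn a f I := by
  let eval (t : T) : A →ₐ[K] K := (Pi.evalAlgHom K (fun _ => K) t).comp A.val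
  let 𝔪 (t : T) : Ideal A := RingHom.ker (eval t)
  have mem_𝔪 {t : T} {a : A} : a ∈ 𝔪 t ↔ a.1 t = 0 := RingHom.mem_ker
  have maximal (t : T) : (𝔪 t).IsMaximal :=
    RingHom.ker_isMaximal_of_surjective _ fun c => ⟨algebraMap K A c, (eval t).commutes c⟩
  have eq_of_𝔪_eq {s t : T} (hst : 𝔪 s = 𝔪 t) : f s = f t := hf s t fun a ha => by
    have hmem : (⟨a, ha⟩ - algebraMap K A (a t) : A) ∈ 𝔪 t := mem_𝔪.2 (sub_self (a t))
    exact sub_eq_zero.1 (mem_𝔪.1 (hst ▸ hmem))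
  have : Finite (𝔪 '' I) := hI.image 𝔪
  have coprime : Pairwise (IsCoprime on ((↑) : 𝔪 '' I → Ideal A)) := by
    rintro ⟨_, s, _, rfl⟩ ⟨_, t, _, rfl⟩ hst
    have := maximal s
    have := maximal t
    exact Ideal.isCoprime_of_isMaximal fun h => hst (Subtype.ext h)
  choose point _ 𝔪_point using fun J : 𝔪 '' I => J.2
  obtain ⟨a, ha⟩ := Ideal.exists_forall_sub_mem_ideal coprime fun J => algebraMap K A (f (point J))
  refine ⟨a, a.2, fun t ht => ?_⟩
  have hat : a.1 t = f (point ⟨𝔪 t, t, ht, rfl⟩) :=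
    sub_eq_zero.1 (mem_𝔪.1 (ha ⟨𝔪 t, t, ht, rfl⟩))
  exact hat.trans (eq_of_𝔪_eq (𝔪_point _))

theorem mem_closure_subalgebra {k K T : Type*} [Field K] [TopologicalSpace K]
    [IsTopologicalSemiring K] [CommSemiring k] [Algebra k K] (hk : DenseRange (algebraMap k K))
    (A : Subalgebra k (T → K)) {f : T → K} (hf : ∀ s t, (∀ a ∈ A, a s = a t) → f s = f t) :
    f ∈ closure (A : Set (T → K)) := by
  have const_mem (c : K) : algebraMap K (T → K) c ∈ A.topologicalClosure :=
    map_mem_closure (f := algebraMap K (T → K)) (continuous_pi fun _ => continuous_id) (hk c)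
      (forall_mem_range.2 A.algebraMap_mem)
  let B : Subalgebra K (T → K) :=
    { A.topologicalClosure with algebraMap_mem' := const_mem }
  have agree (s t : T) (hst : ∀ b ∈ B, b s = b t) : f s = f t :=
    hf s t fun a ha => hst a (A.le_topologicalClosure ha)
  rw [← closure_closure, mem_closure_iff]
  intro U hU hfU
  obtain ⟨I, u, hu, hIU⟩ := isOpen_pi_iff.1 hU f hfU
  obtain ⟨a, ha, haf⟩ := exists_mem_subalgebra_eqOn_of_finite B agree I.finite_toSet
  exact ⟨a, hIU fun i hi => haf hi ▸ (hu i hi).2, ha⟩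

theorem countable_adjoin (k : Type*) {A : Type*} [CommSemiring k] [Countable k] [Semiring A]
    [Algebra k A] {s : Set A} (hs : s.Countable) : (Algebra.adjoin k s : Set A).Countable := by
  have := hs.to_subtype
  rw [← Cardinal.le_aleph0_iff_set_countable, ← Cardinal.lift_le_aleph0]
  exact (Algebra.lift_cardinalMk_adjoin_le k s).trans (by simp)

theorem exists_countable_subset_self {α : Type*} {Φ : Set α → Set α}
    (hcount : ∀ E, E.Countable → (Φ E).Countable)
    (hcont : ∀ E : ℕ → Set α, Monotone E → Φ (⋃ n, E n) ⊆ ⋃ n, Φ (E n)) :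
    ∃ E : Set α, E.Countable ∧ Φ E ⊆ E := by
  let E (n : ℕ) : Set α := (fun F => F ∪ Φ F)^[n] ∅
  have E_succ (n : ℕ) : E (n + 1) = E n ∪ Φ (E n) := iterate_succ_apply' _ n _
  have E_mono : Monotone E := monotone_nat_of_le_succ fun n => E_succ n ▸ subset_union_left
  have E_countable (n : ℕ) : (E n).Countable := by
    induction n with
    | zero => exact countable_empty
    | succ n ih => exact E_succ n ▸ ih.union (hcount _ ih)
  refine ⟨⋃ n, E n, countable_iUnion E_countable, (hcont E E_mono).trans ?_⟩
  exact iUnion_subset fun n =>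
    subset_union_right.trans (E_succ n ▸ subset_iUnion E (n + 1))

theorem isQuotientMap_prodMap_id (X : Type*) {Z M : Type*} [TopologicalSpace X]
    [TopologicalSpace Z] [TopologicalSpace M] [CompactSpace Z] [T2Space M] {q : Z → M}
    (hq : Continuous q) (hsurj : Surjective q) :
    IsQuotientMap (Prod.map id q : X × Z → X × M) :=
  (isProperMap_id.prodMap hq.isProperMap).isClosedMap.isQuotientMap (continuous_id.prodMap hq)
    (surjective_id.prodMap hsurj)

namespace HasCountableNetweight

variable {X : Type*} [TopologicalSpace X]

theorem separableSpace (hX : HasCountableNetweight X) : SeparableSpace X := by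
  obtain ⟨S, hS, hnet⟩ := hX
  have : Countable {s | s ∈ S ∧ s.Nonempty} := (hS.mono fun s hs => hs.1).to_subtype
  let point (s : {s | s ∈ S ∧ s.Nonempty}) : X := s.2.2.some
  refine ⟨range point, countable_range point, fun x => mem_closure_iff.2 fun U hU hxU => ?_⟩
  obtain ⟨s, hs, hxs, hsU⟩ := hnet x U hU hxU
  exact ⟨point ⟨s, hs, x, hxs⟩, hsU (Nonempty.some_mem _), mem_range_self _⟩

theorem cp (hX : HasCountableNetweight X) : HasCountableNetweight (Cp X) := by
  obtain ⟨S, hS, hnet⟩ := hX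
  let B := countableBasis ℝ
  let W (P : Set (Set X × Set ℝ)) : Set (Cp X) := {f | ∀ p ∈ P, MapsTo f.1 p.1 p.2}
  refine ⟨W '' {P | P.Finite ∧ P ⊆ S ×ˢ B},
    (countable_ofPred_finite_subset (hS.prod (countable_countableBasis ℝ))).image W, ?_⟩
  rintro f _ ⟨V, hV, rfl⟩ hfV
  obtain ⟨I, u, hu, hIV⟩ := isOpen_pi_iff.1 hV f.1 hfV
  have hnbhd : ∀ x ∈ I, ∃ p ∈ S ×ˢ B, x ∈ p.1 ∧ MapsTo f.1 p.1 p.2 ∧ p.2 ⊆ u x := by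
    intro x hx
    obtain ⟨b, hb, hfb, hbu⟩ :=
      (isBasis_countableBasis ℝ).exists_subset_of_mem_open (hu x hx).2 (hu x hx).1
    obtain ⟨s, hs, hxs, hsb⟩ := hnet x (f.1 ⁻¹' b)
      (((isBasis_countableBasis ℝ).isOpen hb).preimage f.2) hfb
    exact ⟨(s, b), ⟨hs, hb⟩, hxs, hsb, hbu⟩
  choose! p hp hxp hfp hpu using hnbhd
  refine ⟨W (p '' I), ⟨p '' I, ⟨I.finite_toSet.image p, image_subset_iff.2 hp⟩, rfl⟩,
    forall_mem_image.2 hfp, fun g hg => hIV fun x hx => ?_⟩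
  exact hpu x hx (hg (p x) (mem_image_of_mem p hx) (hxp x hx))

end HasCountableNetweight

namespace Cp

section Comp

variable {S T : Type*} [TopologicalSpace S] [TopologicalSpace T]

theorem continuous_eval (t : T) : Continuous fun f : Cp T => f.1 t :=
  (continuous_apply t).comp continuous_subtype_val

/-- The map `Cp T → Cp S` dual to a continuous map `p : S → T`. -/
def comp (p : C(S, T)) (f : Cp T) : Cp S := ⟨f.1 ∘ p, f.2.comp p.continuous⟩

theorem isEmbedding_comp {p : C(S, T)} (hp : Surjective p) : IsEmbedding (comp p) :=
  .of_comp (Continuous.subtype_mk (continuous_pi fun s => continuous_eval (p s)) _)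
    continuous_subtype_val ((hp.isEmbedding_comp p).comp .subtypeVal)

/-- The subspace of `Cp S` of the functions that are constant on the fibres of `p`. -/
def factoring {M : Type*} (p : S → M) : Set (Cp S) := {f | f.1.FactorsThrough p}

theorem isClosed_factoring {M : Type*} (p : S → M) : IsClosed (factoring p) := by
  simp only [factoring, FactorsThrough, ofPred_forall]
  exact isClosed_iInter fun s => isClosed_iInter fun s' => isClosed_iInter fun _ =>
    isClosed_eq (continuous_eval s) (continuous_eval s')

theorem range_comp {p : C(S, T)} (hp : IsQuotientMap p) : range (comp p) = factoring p := by
  refine Subset.antisymm ?_ fun f hf => ?_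
  · rintro _ ⟨f, rfl⟩ s s' hss'
    exact congrArg f.1 hss'
  · let g : C(T, ℝ) := hp.lift ⟨f.1, f.2⟩ hf
    exact ⟨⟨g, g.continuous⟩, Subtype.ext (congrArg DFunLike.coe (hp.lift_comp ⟨f.1, f.2⟩ hf))⟩

/-- For a quotient map `p : S → T`, the space `Cp T` is the subspace of `Cp S` of the functions
that factor through `p`. -/
noncomputable def homeomorphFactoring {p : S → T} (hp : IsQuotientMap p) :
    Cp T ≃ₜ factoring p :=
  (isEmbedding_comp (p := ⟨p, hp.continuous⟩) hp.surjective).toHomeomorph.trans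
    (.setCongr (range_comp hp))

end Comp

section Diagonal

variable {Z : Type*} [TopologicalSpace Z]

/-- The diagonal product of a family `E` of functions on `Z`, mapping `z` to `(φ z)_{φ ∈ E}`. -/
def diagonal (E : Set (Cp Z)) (z : Z) : E → ℝ := fun φ => φ.1.1 z

theorem continuous_diagonal (E : Set (Cp Z)) : Continuous (diagonal E) :=
  continuous_pi fun φ => φ.1.2

instance [CompactSpace Z] (E : Set (Cp Z)) : CompactSpace (range (diagonal E)) :=
  isCompact_iff_compactSpace.1 (isCompact_range (continuous_diagonal E))

theorem factoring_prodMap_rangeFactorization_diagonal (X : Type*) [TopologicalSpace X]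
    (E : Set (Cp Z)) :
    factoring (Prod.map id (rangeFactorization (diagonal E)) : X × Z → X × range (diagonal E)) =
      factoring (Prod.map id (diagonal E)) := by
  simp only [factoring, FactorsThrough, Prod.forall, Prod.map_apply, Prod.mk.injEq,
    rangeFactorization_eq_rangeFactorization_iff]

/-- `Cp (X × M)`, where `M` is the image of the diagonal product of `E`, as a subspace of
`Cp (X × Z)`. -/
noncomputable def homeomorphFactoringDiagonal (X : Type*) [TopologicalSpace X] [CompactSpace Z]
    (E : Set (Cp Z)) :
    Cp (X × range (diagonal E)) ≃ₜ
      factoring (Prod.map id (diagonal E) : X × Z → X × (E → ℝ)) :=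
  (homeomorphFactoring (isQuotientMap_prodMap_id X (continuous_diagonal E).rangeFactorization
    rangeFactorization_surjective)).trans
    (.setCongr (factoring_prodMap_rangeFactorization_diagonal X E))

end Diagonal

section ProductAlgebra

variable {X Y Z : Type*} [TopologicalSpace X] [TopologicalSpace Y] [TopologicalSpace Z]

/-- The rational algebra of functions on `X × Z` generated by the functions in `G` of the first
variable and those in `E` of the second. Rational scalars keep it countable. -/
noncomputable def productAlgebra (G : Set (Cp X)) (E : Set (Cp Z)) : Subalgebra ℚ (X × Z → ℝ) :=
  Algebra.adjoin ℚ ((fun g => g.1 ∘ Prod.fst) '' G ∪ (fun φ => φ.1 ∘ Prod.snd) '' E)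

theorem productAlgebra_mono (G : Set (Cp X)) :
    Monotone (productAlgebra G : Set (Cp Z) → Subalgebra ℚ (X × Z → ℝ)) := fun _ _ h =>
  Algebra.adjoin_mono (union_subset_union_right _ (image_mono h))

theorem continuous_of_mem_productAlgebra {G : Set (Cp X)} {E : Set (Cp Z)} {a : X × Z → ℝ}
    (ha : a ∈ productAlgebra G E) : Continuous a := by
  have hle : productAlgebra G E ≤ continuousSubalgebra := Algebra.adjoin_le <|
    union_subset (image_subset_iff.2 fun g _ => g.2.comp continuous_fst)
      (image_subset_iff.2 fun φ _ => φ.2.comp continuous_snd)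
  exact hle ha

theorem countable_productAlgebra {G : Set (Cp X)} {E : Set (Cp Z)} (hG : G.Countable)
    (hE : E.Countable) : (productAlgebra G E : Set (X × Z → ℝ)).Countable :=
  countable_adjoin ℚ ((hG.image _).union (hE.image _))

theorem coe_productAlgebra_iUnion (G : Set (Cp X)) {E : ℕ → Set (Cp Z)} (hE : Monotone E) :
    (productAlgebra G (⋃ n, E n) : Set (X × Z → ℝ)) = ⋃ n, productAlgebra G (E n) := by
  have hdir : Directed (· ≤ ·) fun n => productAlgebra G (E n) :=
    ((productAlgebra_mono G).comp hE).directed_le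
  rw [← Subalgebra.coe_iSup_of_directed hdir]
  simp only [productAlgebra, image_iUnion, union_iUnion, Algebra.adjoin_iUnion]

theorem mem_closure_productAlgebra {G : Set (Cp X)} (hG : Dense G) {E : Set (Cp Z)}
    {f : Cp (X × Z)} (hf : f ∈ factoring (Prod.map id (diagonal E) : X × Z → X × (E → ℝ))) :
    f ∈ closure {a : Cp (X × Z) | a.1 ∈ productAlgebra G E} := by
  have hval : ((↑) '' {a : Cp (X × Z) | a.1 ∈ productAlgebra G E} : Set (X × Z → ℝ)) =
      productAlgebra G E :=
    image_preimage_eq_of_subset fun a ha => ⟨⟨a, continuous_of_mem_productAlgebra ha⟩, rfl⟩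
  rw [closure_subtype, hval]
  refine mem_closure_subalgebra Rat.denseRange_cast _ ?_
  rintro ⟨x, z⟩ ⟨x', z'⟩ hagree
  have hx (g : Cp X) : g.1 x = g.1 x' := by
    refine closure_minimal (fun g hg => ?_)
      (isClosed_eq (continuous_eval x) (continuous_eval x')) (hG g)
    exact hagree _ (Algebra.subset_adjoin (.inl ⟨g, hg, rfl⟩))
  have hz : diagonal E z = diagonal E z' := funext fun φ =>
    hagree _ (Algebra.subset_adjoin (.inr ⟨φ.1, φ.2, rfl⟩))
  calc f.1 (x, z) = f.1 (x', z) := hx (comp ⟨fun x => (x, z), by fun_prop⟩ f)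
    _ = f.1 (x', z') := hf (Prod.ext rfl hz)

/-- The sections over points of `D` of the images under `h` of the continuous functions in
`productAlgebra G E`. -/
def sections (h : Cp (X × Z) → Cp (Y × Z)) (G : Set (Cp X)) (D : Set Y) (E : Set (Cp Z)) :
    Set (Cp Z) :=
  image2 (fun y a => comp ⟨Prod.mk y, by fun_prop⟩ (h a)) D {a | a.1 ∈ productAlgebra G E}

variable {h : Cp (X × Z) → Cp (Y × Z)} {G : Set (Cp X)} {D : Set Y}

theorem countable_sections (hG : G.Countable) (hD : D.Countable) {E : Set (Cp Z)}
    (hE : E.Countable) : (sections h G D E).Countable :=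
  hD.image2 ((countable_productAlgebra hG hE).preimage Subtype.val_injective) _

theorem sections_iUnion {E : ℕ → Set (Cp Z)} (hE : Monotone E) :
    sections h G D (⋃ n, E n) = ⋃ n, sections h G D (E n) := by
  have hmem : {a : Cp (X × Z) | a.1 ∈ productAlgebra G (⋃ n, E n)} =
      ⋃ n, {a | a.1 ∈ productAlgebra G (E n)} := by
    ext a
    simpa using Set.ext_iff.1 (coe_productAlgebra_iUnion G hE) a.1
  simp only [sections, hmem, image2_iUnion_right]

theorem mapsTo_factoring_of_sections_subset (hh : Continuous h) (hG : Dense G) (hD : Dense D)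
    {E : Set (Cp Z)} (hE : sections h G D E ⊆ E) :
    MapsTo h (factoring (Prod.map id (diagonal E))) (factoring (Prod.map id (diagonal E))) := by
  intro f hf
  refine closure_minimal (fun a ha => ?_)
    ((isClosed_factoring _).preimage hh) (mem_closure_productAlgebra hG hf)
  rintro ⟨y, z⟩ ⟨y', z'⟩ hyz
  obtain ⟨rfl, hz⟩ : y = y' ∧ diagonal E z = diagonal E z' := Prod.ext_iff.1 hyz
  have hcont (z : Z) : Continuous fun y => (h a).1 (y, z) := (h a).2.comp (by fun_prop)
  refine congrFun ((hcont z).ext_on hD (hcont z') fun d hd => ?_) y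
  exact congrFun hz ⟨_, hE (mem_image2_of_mem hd ha)⟩

end ProductAlgebra

theorem exists_countable_factoring_eq_preimage {X Y Z : Type*} [TopologicalSpace X]
    [TopologicalSpace Y] [TopologicalSpace Z] [SeparableSpace X] [SeparableSpace (Cp X)]
    [SeparableSpace Y] [SeparableSpace (Cp Y)] (h : Cp (X × Z) ≃ₜ Cp (Y × Z)) :
    ∃ E : Set (Cp Z), E.Countable ∧ factoring (Prod.map id (diagonal E)) =
      h ⁻¹' factoring (Prod.map id (diagonal E)) := by
  obtain ⟨A, hA, hA_dense⟩ := exists_countable_dense X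
  obtain ⟨B, hB, hB_dense⟩ := exists_countable_dense Y
  obtain ⟨F, hF, hF_dense⟩ := exists_countable_dense (Cp X)
  obtain ⟨G, hG, hG_dense⟩ := exists_countable_dense (Cp Y)
  obtain ⟨E, hE, hsub⟩ := exists_countable_subset_self
    (Φ := fun E : Set (Cp Z) => sections h F B E ∪ sections h.symm G A E)
    (fun E hE => (countable_sections hF hB hE).union (countable_sections hG hA hE))
    fun E hE => by simp only [sections_iUnion hE, iUnion_union_distrib, subset_rfl]
  obtain ⟨hsub, hsub_symm⟩ := union_subset_iff.1 hsub
  have hmaps := mapsTo_factoring_of_sections_subset h.continuous hF_dense hB_dense hsub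
  have hmaps_symm :=
    mapsTo_factoring_of_sections_subset h.symm.continuous hG_dense hA_dense hsub_symm
  refine ⟨E, hE, hmaps.subset_preimage.antisymm fun f hf => ?_⟩
  exact h.symm_apply_apply f ▸ hmaps_symm hf

end Cp

theorem stmt1_general {X Y : Type*} {Z : Type u} [TopologicalSpace X] [TopologicalSpace Y]
    [TopologicalSpace Z] [SeparableSpace X] [SeparableSpace (Cp X)] [SeparableSpace Y]
    [SeparableSpace (Cp Y)] [CompactSpace Z] (h : Nonempty (Cp (X × Z) ≃ₜ Cp (Y × Z))) :
    ∃ (M : Type u) (_ : TopologicalSpace M), CompactSpace M ∧ MetrizableSpace M ∧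
      Nonempty (Cp (X × M) ≃ₜ Cp (Y × M)) := by
  obtain ⟨h⟩ := h
  obtain ⟨E, hE, hpre⟩ := Cp.exists_countable_factoring_eq_preimage h
  have := hE.to_subtype
  refine ⟨range (Cp.diagonal E), inferInstance, inferInstance, inferInstance, ⟨?_⟩⟩
  exact (Cp.homeomorphFactoringDiagonal X E).trans <|
    (h.sets hpre).trans (Cp.homeomorphFactoringDiagonal Y E).symm

/-- If `X` and `Y` are Tychonoff spaces of countable netweight, `Z` is compact Hausdorff, and
`Cp (X × Z)` is homeomorphic to `Cp (Y × Z)`, then there is a compact metrizable space `M` with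
`Cp (X × M)` homeomorphic to `Cp (Y × M)`. -/
theorem stmt1 {X Y Z : Type u} [TopologicalSpace X] [TopologicalSpace Y] [TopologicalSpace Z]
    [T35Space X] [T35Space Y] [CompactSpace Z] [T2Space Z]
    (hX : HasCountableNetweight X) (hY : HasCountableNetweight Y)
    (h : Nonempty (Cp (X × Z) ≃ₜ Cp (Y × Z))) :
    ∃ (M : Type u) (tM : TopologicalSpace M), CompactSpace M ∧ MetrizableSpace M ∧
      Nonempty (Cp (X × M) ≃ₜ Cp (Y × M)) := by
  have := hX.separableSpace
  have := hX.cp.separableSpace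
  have := hY.separableSpace
  have := hY.cp.separableSpace
  exact stmt1_general h
end

section
/- Let $X$ be a separable topological space, $A$ a countable dense subset of $X$, $Z$ a topological space, and $f:X\times Z\to \mathbb{R}^{\omega}$ a perfect map. Let $G_1:Z\to \mathbb{R}^{A\times\omega}$ be the diagonal product $G_1(z)=\langle f(a,z): a\in A\rangle$ of the maps $z\mapsto f(a,z)$ for $a\in A$. Then there exists a continuous map $G_2: X\times G_1(Z)\to \mathbb{R}^{\omega}$ such that $f=G_2\circ(\mathrm{id}_X\times G_1)$, where $G_1(Z)$ carries the subspace topology and $(\mathrm{id}_X\times G_1)(x,z)=(x,G_1(z))$. -/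
open TopologicalSpace Function Set Topology

/-! Proper maps are stable under product with an identity, so `id × G₁` is a quotient map onto
`X × G₁(Z)` as soon as `G₁` is proper, and `f` descends continuously because its slices are
determined by their values on the dense set `A`. Properness of `G₁` is inherited from any one slice
`f (a, ·)` with `a ∈ A`, which factors through `G₁`. -/

section

variable {X Y Z W κ : Type*} [TopologicalSpace X] [TopologicalSpace Y] [TopologicalSpace Z]
  [TopologicalSpace W]

theorem IsPerfectMap.isProperMap {f : X → Y} (hf : IsPerfectMap f) : IsProperMap f :=
  isProperMap_iff_isClosedMap_and_compact_fibers.2 hf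

theorem isProperMap_slice [T1Space Y] {f : X × Z → Y} (hf : IsProperMap f) (a : X) :
    IsProperMap fun z => f (a, z) := by
  refine isProperMap_iff_ultrafilter.2 ⟨hf.continuous.comp (by fun_prop), fun 𝒰 y hy => ?_⟩
  obtain ⟨⟨b, z⟩, hbz, hlim⟩ :=
    hf.ultrafilter_le_nhds_of_tendsto (𝒰 := 𝒰.map (Prod.mk a)) hy
  have hz : (𝒰 : Filter Z) ≤ 𝓝 z := (continuous_snd.tendsto (b, z)).comp hlim
  have hconst : Filter.map (fun _ : Z => a) 𝒰 ≤ 𝓝 b :=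
    (continuous_fst.tendsto (b, z)).comp hlim
  have hb : a ⤳ b := specializes_iff_pure.2 (Filter.map_const (f := (𝒰 : Filter Z)) ▸ hconst)
  -- `b` may differ from `a` when `X` is not `T1`, but `f` cannot tell them apart.
  have hab : f (a, z) = f (b, z) := ((hb.prod specializes_rfl).map hf.continuous).eq
  exact ⟨z, hab.trans hbz, hz⟩

theorem isQuotientMap_id_prodMap_rangeFactorization {G : Z → W} (hG : IsProperMap G) :
    IsQuotientMap (Prod.map (id : X → X) (rangeFactorization G)) := by
  have hrange : IsProperMap (rangeFactorization G) :=
    isProperMap_of_comp_of_inj hG.continuous.rangeFactorization continuous_subtype_val hG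
      Subtype.val_injective
  have hprod := (isProperMap_id (X := X)).prodMap hrange
  exact hprod.isClosedMap.isQuotientMap hprod.continuous
    (surjective_id.prodMap rangeFactorization_surjective)

theorem exists_continuous_eq_comp_id_prodMap {f : X × Z → Y} (hf : Continuous f) {G : Z → W}
    (hG : IsProperMap G) (hfG : ∀ x z w, G z = G w → f (x, z) = f (x, w)) :
    ∃ G₂ : X × range G → Y, Continuous G₂ ∧ ∀ x z, f (x, z) = G₂ (x, ⟨G z, ⟨z, rfl⟩⟩) := by
  let q : C(X × Z, X × range G) := ⟨_, (isQuotientMap_id_prodMap_rangeFactorization hG).continuous⟩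
  have hq : IsQuotientMap q := isQuotientMap_id_prodMap_rangeFactorization hG
  have hfactors : FactorsThrough f q := by
    rintro ⟨x, z⟩ ⟨y, w⟩ h
    obtain ⟨rfl, hzw⟩ := Prod.mk.inj h
    exact hfG _ z w (congrArg Subtype.val hzw)
  let G₂ := hq.lift ⟨f, hf⟩ hfactors
  exact ⟨G₂, G₂.continuous, fun x z =>
    (DFunLike.congr_fun (hq.lift_comp ⟨f, hf⟩ hfactors) (x, z)).symm⟩

theorem slice_eq_of_dense [T2Space Y] {A : Set X} (hA : Dense A) {f : X × Z → Y}
    (hf : Continuous f) {z w : Z} (h : ∀ a ∈ A, f (a, z) = f (a, w)) (x : X) :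
    f (x, z) = f (x, w) :=
  congrFun (Continuous.ext_on hA (hf.comp (by fun_prop)) (hf.comp (by fun_prop)) h) x

theorem isProperMap_diagonal [T2Space Y] {A : Set X} (hA : A.Nonempty) {f : X × Z → κ → Y}
    (hf : IsProperMap f) {G₁ : Z → A × κ → Y} (hG₁ : ∀ z a k, G₁ z (a, k) = f (a.1, z) k) :
    IsProperMap G₁ := by
  obtain ⟨a, ha⟩ := hA
  have hcont : Continuous G₁ := continuous_pi fun p => by
    simp only [hG₁]
    exact (continuous_apply p.2).comp (hf.continuous.comp (by fun_prop))
  have hslice : (fun (y : A × κ → Y) k => y (⟨a, ha⟩, k)) ∘ G₁ = fun z => f (a, z) :=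
    funext fun z => funext fun k => hG₁ z ⟨a, ha⟩ k
  exact isProperMap_of_comp_of_t2 hcont (by fun_prop) (hslice ▸ isProperMap_slice hf a)

theorem stmt4_general [T2Space Y] {A : Set X} (hA : Dense A) {f : X × Z → κ → Y}
    (hf : IsProperMap f) {G₁ : Z → A × κ → Y} (hG₁ : ∀ z a k, G₁ z (a, k) = f (a.1, z) k) :
    ∃ G₂ : X × range G₁ → κ → Y, Continuous G₂ ∧
      ∀ x z, f (x, z) = G₂ (x, ⟨G₁ z, ⟨z, rfl⟩⟩) := by
  rcases isEmpty_or_nonempty X with hX | hX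
  · exact ⟨isEmptyElim, continuous_of_discreteTopology, isEmptyElim⟩
  refine exists_continuous_eq_comp_id_prodMap hf.continuous
    (isProperMap_diagonal hA.nonempty hf hG₁) fun x z w hzw => ?_
  refine slice_eq_of_dense hA hf.continuous (fun a ha => funext fun k => ?_) x
  rw [← hG₁ z ⟨a, ha⟩ k, hzw, hG₁]

end

/-- Factorization lemma, constructive form: for a perfect map `f : X × Z → ℝ^ω` and a countable
dense `A ⊆ X`, the diagonal product `G₁ = Δ{f_a : a ∈ A} : Z → ℝ^(A×ω)` admits a continuous
`G₂ : X × G₁(Z) → ℝ^ω` with `f = G₂ ∘ (id_X × G₁)`. -/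
theorem stmt4 {X Z : Type*} [TopologicalSpace X] [TopologicalSpace Z]
    [T35Space X] [T35Space Z]
    [SeparableSpace X] (A : Set X) (hAc : A.Countable) (hAd : Dense A)
    (f : X × Z → ℕ → ℝ) (hf : IsPerfectMap f)
    (G₁ : Z → A × ℕ → ℝ) (hG₁ : ∀ (z : Z) (a : A) (n : ℕ), G₁ z (a, n) = f (a.1, z) n) :
    ∃ G₂ : X × (Set.range G₁) → ℕ → ℝ, Continuous G₂ ∧
      ∀ (x : X) (z : Z), f (x, z) = G₂ (x, ⟨G₁ z, ⟨z, rfl⟩⟩) :=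
  stmt4_general hAd hf.isProperMap hG₁
end

section
/- Let $\tau$ be an ordinal of uncountable cofinality, viewed as the topological space of all ordinals strictly below $\tau$ with the order topology, let $M$ be a separable metrizable space, and let $f:\tau\to M$ be continuous. Then there exists a compact separable subspace $C\subseteq\tau$ such that $f(C)=f(\tau)$. -/
open TopologicalSpace Function Set Topology

universe u

/-! Countably many points of `τ` already have dense image in the range of `f`. Uncountable
cofinality bounds them, so their closure lies in a compact initial segment; the image of this
closure is compact, hence closed, and dense in the range. -/

/-- `ω`-bounded spaces: every countable subset has compact closure. This abstracts the behaviour of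
ordinals of uncountable cofinality. -/
def IsOmegaBounded (X : Type*) [TopologicalSpace X] : Prop :=
  ∀ ⦃A : Set X⦄, A.Countable → IsCompact (closure A)

theorem bddAbove_of_countable_of_aleph0_lt_cof {α : Type*} [LinearOrder α]
    (hα : Cardinal.aleph0 < Order.cof α) {A : Set α} (hA : A.Countable) : BddAbove A :=
  .of_not_isCofinal fun hcof ↦ hα.not_ge ((Order.cof_le hcof).trans hA.le_aleph0)

theorem isOmegaBounded_of_aleph0_lt_cof {α : Type*} [LinearOrder α] [TopologicalSpace α]
    [ClosedIicTopology α] (hα : Cardinal.aleph0 < Order.cof α)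
    (hIic : ∀ b : α, IsCompact (Iic b)) : IsOmegaBounded α := by
  intro A hA
  obtain ⟨b, hb⟩ := bddAbove_of_countable_of_aleph0_lt_cof hα hA
  exact (hIic b).of_isClosed_subset isClosed_closure (closure_minimal hb isClosed_Iic)

theorem isCompact_Iic_of_isLowerSet {α : Type*} [Preorder α] [OrderBot α] [TopologicalSpace α]
    [CompactIccSpace α] {s : Set α} (hs : IsLowerSet s) (b : s) : IsCompact (Iic b) := by
  have hb : IsCompact (Iic (b : α)) := Icc_bot (a := (b : α)) ▸ isCompact_Icc
  refine (IsInducing.subtypeVal.isCompact_preimage_iff ?_).2 hb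
  exact Subtype.range_coe.symm ▸ hs.Iic_subset b.2

theorem isOmegaBounded_Iio_ordinal {τ : Ordinal.{u}} (hτ : Cardinal.aleph0 < τ.cof) :
    IsOmegaBounded (Iio τ) := by
  have hcof : Cardinal.aleph0 < Order.cof (Iio τ) := by
    rwa [Ordinal.cof_Iio, ← Ordinal.lift_cof, Cardinal.aleph0_lt_lift]
  exact isOmegaBounded_of_aleph0_lt_cof hcof (isCompact_Iic_of_isLowerSet (isLowerSet_Iio τ))

theorem exists_countable_range_subset_closure_image {X Y : Type*} [TopologicalSpace Y]
    (f : X → Y) [SeparableSpace (range f)] :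
    ∃ A : Set X, A.Countable ∧ range f ⊆ closure (f '' A) := by
  obtain ⟨D, hDcountable, hDdense⟩ := exists_countable_dense (range f)
  refine ⟨rangeSplitting f '' D, hDcountable.image _, ?_⟩
  simpa only [image_image, apply_rangeSplitting] using Subtype.dense_iff.1 hDdense

theorem stmt7_general {X Y : Type*} [TopologicalSpace X] [TopologicalSpace Y] [T2Space Y]
    (hX : IsOmegaBounded X) {f : X → Y} (hf : Continuous f) [SeparableSpace (range f)] :
    ∃ C : Set X, IsCompact C ∧ IsSeparable C ∧ f '' C = range f := by
  obtain ⟨A, hA, hfA⟩ := exists_countable_range_subset_closure_image f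
  refine ⟨closure A, hX hA, hA.isSeparable.closure, (image_subset_range f _).antisymm ?_⟩
  rwa [image_closure_of_isCompact (hX hA) hf.continuousOn]

/-- If `τ` has uncountable cofinality and `f : τ → M` is continuous into a separable
metrizable space `M`, then there is a compact separable subspace `C ⊆ τ` with `f(C) = f(τ)`. -/
theorem stmt7 (τ : Ordinal.{u}) (hτ : Cardinal.aleph0 < τ.cof)
    {M : Type u} [TopologicalSpace M] [MetrizableSpace M] [SeparableSpace M]
    (f : Set.Iio τ → M) (hf : Continuous f) :
    ∃ C : Set (Set.Iio τ), IsCompact C ∧ TopologicalSpace.IsSeparable C ∧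
      f '' C = Set.range f := by
  have : SeparableSpace (range f) := (IsSeparable.of_separableSpace (range f)).separableSpace
  exact stmt7_general (isOmegaBounded_Iio_ordinal hτ) hf
end
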